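/- An element (γ, s, t) with γ = (γ₁, γ₂, γ₃) ∈ ℝ³ and s, t ∈ ℝ belongs to S(2,1) if and only if the following inequalities hold: γ₁ ≥ γ₂ ≥ γ₃ ≥ 0, γ₁ ≥ s ≥ 0, γ₁ ≥ t ≥ 0, γ₁ + γ₂ ≥ s + t, and γ₁ − γ₃ ≥ |s − t|. -/

import Mathlib

open Matrix

/-- Eigenvalues of a (Hermitian) complex matrix, listed in decreasing order. -/
noncomputable def eigVec {k : ℕ} (X : Matrix (Fin k) (Fin k) ℂ) (hX : X.IsHermitian) :
    Fin k → ℝ :=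
  fun i => hX.eigenvalues (Tuple.sort hX.eigenvalues i.rev)

/-- The `i`-th (0-based) singular value of a rectangular complex matrix:
the square root of the `i`-th largest eigenvalue of `Y * Yᴴ` (and `0` for `i ≥ a`). -/
noncomputable def sval {a b : ℕ} (Y : Matrix (Fin a) (Fin b) ℂ) (i : ℕ) : ℝ :=
  if h : i < a then
    Real.sqrt (eigVec (Y * Yᴴ) (Matrix.isHermitian_mul_conjTranspose_self Y) ⟨i, h⟩)
  else 0

/-- The Horn cone `Horn(k)`. -/
def Horn (k : ℕ) : Set ((Fin k → ℝ) × (Fin k → ℝ) × (Fin k → ℝ)) :=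
  { v | ∃ (X Y : Matrix (Fin k) (Fin k) ℂ) (hX : X.IsHermitian) (hY : Y.IsHermitian),
      v.1 = eigVec X hX ∧ v.2.1 = eigVec Y hY ∧ v.2.2 = eigVec (X + Y) (hX.add hY) }

/-- The Littlewood–Richardson cone `LR(m,n)`. -/
def LRcone (m n : ℕ) : Set ((Fin (m + n) → ℝ) × (Fin m → ℝ) × (Fin n → ℝ)) :=
  { v | ∃ (M : Matrix (Fin (m + n)) (Fin (m + n)) ℂ) (hM : M.IsHermitian),
      v.1 = eigVec M hM ∧
      v.2.1 = eigVec (M.submatrix (Fin.castAdd n) (Fin.castAdd n))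
        (hM.submatrix (Fin.castAdd n)) ∧
      v.2.2 = eigVec (M.submatrix (Fin.natAdd m) (Fin.natAdd m))
        (hM.submatrix (Fin.natAdd m)) }

/-- Top-left `p × p` block. -/
def blockTL (p q : ℕ) (X : Matrix (Fin (p + q)) (Fin (p + q)) ℂ) : Matrix (Fin p) (Fin p) ℂ :=
  X.submatrix (Fin.castAdd q) (Fin.castAdd q)

/-- Top-right `p × q` block. -/
def blockTR (p q : ℕ) (X : Matrix (Fin (p + q)) (Fin (p + q)) ℂ) : Matrix (Fin p) (Fin q) ℂ :=
  X.submatrix (Fin.castAdd q) (Fin.natAdd p)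

/-- Bottom-left `q × p` block. -/
def blockBL (p q : ℕ) (X : Matrix (Fin (p + q)) (Fin (p + q)) ℂ) : Matrix (Fin q) (Fin p) ℂ :=
  X.submatrix (Fin.natAdd p) (Fin.castAdd q)

/-- Bottom-right `q × q` block. -/
def blockBR (p q : ℕ) (X : Matrix (Fin (p + q)) (Fin (p + q)) ℂ) : Matrix (Fin q) (Fin q) ℂ :=
  X.submatrix (Fin.natAdd p) (Fin.natAdd p)

/-- `λ* = (−λ_k, …, −λ_1)`. -/
def starVec {k : ℕ} (x : Fin k → ℝ) : Fin k → ℝ := fun i => -x i.rev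

/-- `ŝ^{p,q} = (s₁, …, s_q, 0, …, 0, −s_q, …, −s₁) ∈ ℝ^{p+q}` (with `p − q` middle zeros). -/
noncomputable def hatPQ (p q : ℕ) (s : Fin q → ℝ) : Fin (p + q) → ℝ :=
  fun i =>
    if h : (i : ℕ) < q then s ⟨i, h⟩
    else if h' : (i : ℕ) < p then 0
    else -s ⟨p + q - 1 - i, by have := i.isLt; omega⟩

/-- The cone `A(p,q)`: pairs `(e(X), s(X₁₂))` for `X` Hermitian of size `p+q`. -/
def coneA (p q : ℕ) : Set ((Fin (p + q) → ℝ) × (Fin q → ℝ)) :=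
  { v | ∃ (X : Matrix (Fin (p + q)) (Fin (p + q)) ℂ) (hX : X.IsHermitian),
      v.1 = eigVec X hX ∧ ∀ i : Fin q, v.2 i = sval (blockTR p q X) (i : ℕ) }

/-- The cone `S(p,q)`: triples `(s(X), s(X₁₂), s(X₂₁))`. -/
def coneS (p q : ℕ) : Set ((Fin (p + q) → ℝ) × (Fin q → ℝ) × (Fin q → ℝ)) :=
  { v | ∃ X : Matrix (Fin (p + q)) (Fin (p + q)) ℂ,
      (∀ i : Fin (p + q), v.1 i = sval X (i : ℕ)) ∧
      (∀ i : Fin q, v.2.1 i = sval (blockTR p q X) (i : ℕ)) ∧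
      (∀ i : Fin q, v.2.2 i = sval (blockBL p q X) (i : ℕ)) }

/-- The cone `T(p,q)`: triples `(s(X), s(X₁₁), s(X₂₂))`. -/
def coneT (p q : ℕ) : Set ((Fin (p + q) → ℝ) × (Fin p → ℝ) × (Fin q → ℝ)) :=
  { v | ∃ X : Matrix (Fin (p + q)) (Fin (p + q)) ℂ,
      (∀ i : Fin (p + q), v.1 i = sval X (i : ℕ)) ∧
      (∀ i : Fin p, v.2.1 i = sval (blockTL p q X) (i : ℕ)) ∧
      (∀ i : Fin q, v.2.2 i = sval (blockBR p q X) (i : ℕ)) }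

/-- `μ(A) = (a_r − r ≥ … ≥ a₂ − 2 ≥ a₁ − 1)` as a decreasing real vector, for
`A = {a₁ < … < a_r}` a subset of `[n]` (0-based indexing internally). -/
noncomputable def muVec {n r : ℕ} (A : Finset (Fin n)) (h : A.card = r) : Fin r → ℝ :=
  fun k => (((A.orderIsoOfFin h k.rev : Fin n) : ℕ) : ℝ) - ((k.rev : ℕ) : ℝ)

/-- `A^o = {ℓ + 1 − a : a ∈ A}` inside `[ℓ]`. -/
def opp {n : ℕ} (A : Finset (Fin n)) : Finset (Fin n) := A.image Fin.rev

/-- `|s|_{K ∩ [q]}` where `K ⊆ [n]`, `s ∈ ℝ^q` and `[q]` is viewed inside `[n]`. -/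
noncomputable def sumRestr {n q : ℕ} (s : Fin q → ℝ) (K : Finset (Fin n)) : ℝ :=
  ∑ i ∈ K, (if h : (i : ℕ) < q then s ⟨i, h⟩ else 0)

/-- The augmented matrix `Ŷ^{p,q} = [[0, Y], [Yᴴ, 0]]` of size `p + q`. -/
def hatM (p q : ℕ) (Y : Matrix (Fin p) (Fin q) ℂ) : Matrix (Fin (p + q)) (Fin (p + q)) ℂ :=
  Matrix.reindex finSumFinEquiv finSumFinEquiv (Matrix.fromBlocks 0 Y Yᴴ 0)


/-- The squared Euclidean norm of a complex vector. -/
noncomputable def sqNorm {n : ℕ} (v : Fin n → ℂ) : ℝ := ∑ i, Complex.normSq (v i)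

lemma ofReal_sqNorm {n : ℕ} (v : Fin n → ℂ) : (sqNorm v : ℂ) = v ⬝ᵥ star v := by
  simp [sqNorm, dotProduct, Complex.mul_conj]

lemma eigVec_antitone {k : ℕ} (M : Matrix (Fin k) (Fin k) ℂ) (hM : M.IsHermitian) :
    Antitone (eigVec M hM) := fun _ _ hij =>
  Tuple.monotone_sort hM.eigenvalues (Fin.rev_le_rev.mpr hij)

lemma exists_eigVec_diagonalization {k : ℕ} (M : Matrix (Fin k) (Fin k) ℂ)
    (hM : M.IsHermitian) : ∃ U : Matrix (Fin k) (Fin k) ℂ,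
      U * Uᴴ = 1 ∧ M = U * diagonal (fun i => (eigVec M hM i : ℂ)) * Uᴴ := by
  let e : Fin k ≃ Fin k := Fin.revPerm.trans (Tuple.sort hM.eigenvalues)
  refine ⟨(hM.eigenvectorUnitary : Matrix (Fin k) (Fin k) ℂ).submatrix id e, ?_, ?_⟩
  · rw [conjTranspose_submatrix, submatrix_mul_equiv, submatrix_id_id]
    exact Unitary.mul_star_self_of_mem hM.eigenvectorUnitary.2
  · have h : diagonal (fun i => (eigVec M hM i : ℂ)) =
        (diagonal (RCLike.ofReal ∘ hM.eigenvalues) : Matrix (Fin k) (Fin k) ℂ).submatrix e e := by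
      rw [submatrix_diagonal_equiv]
      rfl
    rw [h, conjTranspose_submatrix, submatrix_mul_equiv, submatrix_mul_equiv, submatrix_id_id]
    exact hM.spectral_theorem

lemma eval_charpoly_eq_prod_eigVec {k : ℕ} (M : Matrix (Fin k) (Fin k) ℂ) (hM : M.IsHermitian)
    (x : ℝ) : (scalar (Fin k) (x : ℂ) - M).det = ∏ i, ((x - eigVec M hM i : ℝ) : ℂ) := by
  have h := congrArg (Polynomial.eval (x : ℂ)) hM.charpoly_eq
  rw [eval_charpoly] at h
  rw [h, Polynomial.eval_prod,
    ← Equiv.prod_comp (Fin.revPerm.trans (Tuple.sort hM.eigenvalues))]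
  simp [eigVec]

lemma sval_fin {a b : ℕ} (Y : Matrix (Fin a) (Fin b) ℂ) (i : Fin a) :
    sval Y i = √(eigVec (Y * Yᴴ) (isHermitian_mul_conjTranspose_self Y) i) := by
  simp [sval]

open scoped ComplexOrder in
lemma eigVec_mul_conjTranspose_nonneg {a b : ℕ} (Y : Matrix (Fin a) (Fin b) ℂ) (i : Fin a) :
    0 ≤ eigVec (Y * Yᴴ) (isHermitian_mul_conjTranspose_self Y) i :=
  (posSemidef_self_mul_conjTranspose Y).eigenvalues_nonneg _

lemma sq_sval_fin {a b : ℕ} (Y : Matrix (Fin a) (Fin b) ℂ) (i : Fin a) :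
    sval Y i ^ 2 = eigVec (Y * Yᴴ) (isHermitian_mul_conjTranspose_self Y) i := by
  rw [sval_fin, Real.sq_sqrt (eigVec_mul_conjTranspose_nonneg Y i)]

lemma sval_nonneg {a b : ℕ} (Y : Matrix (Fin a) (Fin b) ℂ) (i : Fin a) : 0 ≤ sval Y i := by
  rw [sval_fin]
  exact Real.sqrt_nonneg _

lemma sval_antitone {a b : ℕ} (Y : Matrix (Fin a) (Fin b) ℂ) :
    Antitone fun i : Fin a => sval Y i := fun i j hij => by
  simp only [sval_fin]
  exact Real.sqrt_le_sqrt (eigVec_antitone _ _ hij)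

lemma eval_charpoly_eq_prod_sval {a b : ℕ} (Y : Matrix (Fin a) (Fin b) ℂ) (x : ℝ) :
    (scalar (Fin a) (x : ℂ) - Y * Yᴴ).det = ∏ i : Fin a, ((x - sval Y i ^ 2 : ℝ) : ℂ) := by
  simp only [sq_sval_fin]
  exact eval_charpoly_eq_prod_eigVec _ _ x

/-- The quadratic form `y ↦ ‖y X‖²` diagonalizes with weights the squared singular values. -/
lemma exists_sqNorm_vecMul_eq {a b : ℕ} (X : Matrix (Fin a) (Fin b) ℂ) :
    ∃ U : Matrix (Fin a) (Fin a) ℂ, ∀ y : Fin a → ℂ, sqNorm (y ᵥ* U) = sqNorm y ∧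
      sqNorm (y ᵥ* X) = ∑ i : Fin a, sval X i ^ 2 * Complex.normSq ((y ᵥ* U) i) := by
  obtain ⟨U, hU, hX⟩ := exists_eigVec_diagonalization _ (isHermitian_mul_conjTranspose_self X)
  have key {n : ℕ} (Z : Matrix (Fin a) (Fin n) ℂ) (y : Fin a → ℂ) :
      (sqNorm (y ᵥ* Z) : ℂ) = y ᵥ* (Z * Zᴴ) ⬝ᵥ star y := by
    rw [ofReal_sqNorm, star_vecMul, dotProduct_mulVec, vecMul_vecMul]
  refine ⟨U, fun y => ⟨?_, ?_⟩⟩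
  · apply Complex.ofReal_injective
    rw [key, hU, vecMul_one, ofReal_sqNorm]
  · apply Complex.ofReal_injective
    rw [key, hX, ← vecMul_vecMul, ← dotProduct_mulVec, ← star_vecMul, ← vecMul_vecMul]
    simp only [← sq_sval_fin, dotProduct, vecMul_diagonal, Pi.star_apply, Complex.ofReal_sum,
      Complex.ofReal_mul, Complex.normSq_eq_conj_mul_self]
    refine Finset.sum_congr rfl fun i _ => ?_
    simp only [RCLike.star_def]
    ring


lemma norm_dotProduct_sq_le {n : ℕ} (a b : Fin n → ℂ) :
    ‖a ⬝ᵥ b‖ ^ 2 ≤ sqNorm a * sqNorm b := by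
  have h : ‖a ⬝ᵥ b‖ ≤ ∑ i, ‖a i‖ * ‖b i‖ :=
    (norm_sum_le _ _).trans_eq (by simp)
  calc ‖a ⬝ᵥ b‖ ^ 2 ≤ (∑ i, ‖a i‖ * ‖b i‖) ^ 2 := by gcongr
    _ ≤ (∑ i, ‖a i‖ ^ 2) * ∑ i, ‖b i‖ ^ 2 := Finset.sum_mul_sq_le_sq_mul_sq _ _ _
    _ = sqNorm a * sqNorm b := by simp [sqNorm, Complex.normSq_eq_norm_sq]

/-- Bounds for `‖y X‖` in terms of the singular values; the middle singular value bounds it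
on a suitable hyperplane. -/
lemma exists_sqNorm_vecMul_bounds (X : Matrix (Fin 3) (Fin 3) ℂ) :
    ∃ k : Fin 3 → ℂ, ∀ y : Fin 3 → ℂ,
      sval X 2 ^ 2 * sqNorm y ≤ sqNorm (y ᵥ* X) ∧
      sqNorm (y ᵥ* X) ≤ sval X 0 ^ 2 * sqNorm y ∧
      (y ⬝ᵥ k = 0 → sqNorm (y ᵥ* X) ≤ sval X 1 ^ 2 * sqNorm y) := by
  obtain ⟨U, hU⟩ := exists_sqNorm_vecMul_eq X
  refine ⟨fun i => U i 0, fun y => ?_⟩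
  obtain ⟨h1, h2⟩ := hU y
  have h3 : sval X 2 ^ 2 ≤ sval X 1 ^ 2 :=
    pow_le_pow_left₀ (sval_nonneg X 2) (sval_antitone X (by decide : (1 : Fin 3) ≤ 2)) 2
  have h4 : sval X 1 ^ 2 ≤ sval X 0 ^ 2 :=
    pow_le_pow_left₀ (sval_nonneg X 1) (sval_antitone X (by decide : (0 : Fin 3) ≤ 1)) 2
  have n0 := Complex.normSq_nonneg ((y ᵥ* U) 0)
  have n1 := Complex.normSq_nonneg ((y ᵥ* U) 1)
  have n2 := Complex.normSq_nonneg ((y ᵥ* U) 2)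
  rw [h2, ← h1]
  simp only [sqNorm, Fin.sum_univ_three, Fin.val_zero, Fin.val_one, Fin.val_two]
  refine ⟨by nlinarith, by nlinarith, fun hk => ?_⟩
  have h0 : (y ᵥ* U) 0 = 0 := hk
  rw [h0, Complex.normSq_zero]
  nlinarith

/-- Every linear form on `ℂ²` attains its norm on a unit vector. -/
lemma exists_unit_pairing_eq (c d : ℂ) {r : ℝ}
    (hr : 0 ≤ r) (h : r ^ 2 = Complex.normSq c + Complex.normSq d) :
    ∃ w z : ℂ, Complex.normSq w + Complex.normSq z = 1 ∧ w * c + z * d = r := by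
  rcases hr.eq_or_lt with rfl | hr
  · have hc := Complex.normSq_nonneg c
    have hd := Complex.normSq_nonneg d
    have hc' : c = 0 := Complex.normSq_eq_zero.mp (by linarith)
    have hd' : d = 0 := Complex.normSq_eq_zero.mp (by linarith)
    exact ⟨1, 0, by simp, by simp [hc', hd']⟩
  · have hrc : (r : ℂ) ≠ 0 := by exact_mod_cast hr.ne'
    refine ⟨star c / r, star d / r, ?_, ?_⟩
    · simp only [RCLike.star_def, Complex.normSq_div, Complex.normSq_conj, Complex.normSq_ofReal]
      field_simp
      linarith
    · have h' : (r : ℂ) ^ 2 = Complex.normSq c + Complex.normSq d := by exact_mod_cast h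
      rw [Complex.normSq_eq_conj_mul_self, Complex.normSq_eq_conj_mul_self] at h'
      simp only [RCLike.star_def]
      field_simp
      rw [h']

/-- Every linear form on `ℂ²` vanishes on a unit vector. -/
lemma exists_unit_pairing_eq_zero (c d : ℂ) :
    ∃ w z : ℂ, Complex.normSq w + Complex.normSq z = 1 ∧ w * c + z * d = 0 := by
  rcases eq_or_ne (Complex.normSq c + Complex.normSq d) 0 with h | h
  · have hc := Complex.normSq_nonneg c
    have hd := Complex.normSq_nonneg d
    have hc' : c = 0 := Complex.normSq_eq_zero.mp (by linarith)
    have hd' : d = 0 := Complex.normSq_eq_zero.mp (by linarith)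
    exact ⟨1, 0, by simp, by simp [hc', hd']⟩
  · set r := √(Complex.normSq c + Complex.normSq d) with hr
    have hsq : r ^ 2 = Complex.normSq c + Complex.normSq d :=
      Real.sq_sqrt (add_nonneg (Complex.normSq_nonneg c) (Complex.normSq_nonneg d))
    have hr0 : r ≠ 0 := by
      intro h0
      rw [h0] at hsq
      exact h (by linarith)
    refine ⟨d / r, -c / r, ?_, by ring⟩
    simp only [Complex.normSq_div, Complex.normSq_neg, Complex.normSq_ofReal]
    field_simp
    linarith

lemma norm_pairing_le {w z c d : ℂ} (h : Complex.normSq w + Complex.normSq z = 1) {r : ℝ}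
    (hr : 0 ≤ r) (hcd : r ^ 2 = Complex.normSq c + Complex.normSq d) : ‖w * c + z * d‖ ≤ r := by
  have h' := norm_dotProduct_sq_le ![w, z] ![c, d]
  simp only [sqNorm, dotProduct, Fin.sum_univ_two, cons_val_zero, cons_val_one, h, one_mul,
    ← hcd] at h'
  exact le_of_sq_le_sq h' hr

lemma sq_sval_two_by_one (Y : Matrix (Fin 2) (Fin 1) ℂ) :
    sval Y 0 ^ 2 = Complex.normSq (Y 0 0) + Complex.normSq (Y 1 0) := by
  have key (x : ℝ) : x ^ 2 - x * (Complex.normSq (Y 0 0) + Complex.normSq (Y 1 0)) =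
      (x - sval Y 0 ^ 2) * (x - sval Y 1 ^ 2) := by
    have h := eval_charpoly_eq_prod_sval Y x
    rw [det_fin_two, Fin.prod_univ_two] at h
    apply Complex.ofReal_injective
    push_cast at h ⊢
    simp [mul_apply] at h
    rw [← h, Complex.normSq_eq_conj_mul_self, Complex.normSq_eq_conj_mul_self]
    ring
  have h0 := key 0
  have h1 := key 1
  have h2 : sval Y 1 ≤ sval Y 0 := sval_antitone Y (by decide : (0 : Fin 2) ≤ 1)
  have h3 := sval_nonneg Y 1
  rcases mul_eq_zero.mp (show sval Y 0 ^ 2 * sval Y 1 ^ 2 = 0 by linarith) with h | h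
  · have h4 : sval Y 0 = 0 := by simpa using h
    have h5 : sval Y 1 = 0 := le_antisymm (h4 ▸ h2) h3
    rw [h4, h5] at h1
    rw [h4]
    linarith
  · rw [h] at h1
    linarith

lemma sq_sval_one_by_two (Y : Matrix (Fin 1) (Fin 2) ℂ) :
    sval Y 0 ^ 2 = Complex.normSq (Y 0 0) + Complex.normSq (Y 0 1) := by
  have h := eval_charpoly_eq_prod_sval Y 0
  apply Complex.ofReal_injective
  simp [mul_apply, Fin.sum_univ_two] at h
  push_cast
  rw [Complex.normSq_eq_conj_mul_self, Complex.normSq_eq_conj_mul_self]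
  linear_combination h

section Necessity

variable {X : Matrix (Fin 3) (Fin 3) ℂ} {s t : ℝ}

lemma col_norm_le_sval_zero (hs : 0 ≤ s)
    (hs' : s ^ 2 = Complex.normSq (X 0 2) + Complex.normSq (X 1 2)) : s ≤ sval X 0 := by
  obtain ⟨w, z, hwz, hp⟩ := exists_unit_pairing_eq _ _ hs hs'
  obtain ⟨k, hk⟩ := exists_sqNorm_vecMul_bounds X
  have h := (hk ![w, z, 0]).2.1
  have h1 : sqNorm ![w, z, 0] = 1 := by simp [sqNorm, Fin.sum_univ_three, hwz]
  have h2 : s ^ 2 ≤ sqNorm (![w, z, 0] ᵥ* X) := by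
    have h3 : (![w, z, 0] ᵥ* X) 2 = s := by
      simp [vecMul, dotProduct, Fin.sum_univ_three, hp]
    rw [sqNorm, Fin.sum_univ_three, h3, Complex.normSq_ofReal, ← sq]
    have := Complex.normSq_nonneg ((![w, z, 0] ᵥ* X) 0)
    have := Complex.normSq_nonneg ((![w, z, 0] ᵥ* X) 1)
    linarith
  rw [h1, mul_one] at h
  exact le_of_sq_le_sq (h2.trans h) (sval_nonneg X 0)

lemma row_norm_le_sval_zero
    (ht' : t ^ 2 = Complex.normSq (X 2 0) + Complex.normSq (X 2 1)) : t ≤ sval X 0 := by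
  obtain ⟨k, hk⟩ := exists_sqNorm_vecMul_bounds X
  have h := (hk ![0, 0, 1]).2.1
  simp [sqNorm, Fin.sum_univ_three, vecMul, dotProduct] at h
  have := Complex.normSq_nonneg (X 2 2)
  exact le_of_sq_le_sq (by linarith) (sval_nonneg X 0)

lemma col_norm_add_row_norm_le (hs : 0 ≤ s) (ht : 0 ≤ t)
    (hs' : s ^ 2 = Complex.normSq (X 0 2) + Complex.normSq (X 1 2))
    (ht' : t ^ 2 = Complex.normSq (X 2 0) + Complex.normSq (X 2 1)) :
    s + t ≤ sval X 0 + sval X 1 := by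
  obtain ⟨w, z, hwz, hp⟩ := exists_unit_pairing_eq _ _ hs hs'
  obtain ⟨w', z', hwz', hp'⟩ := exists_unit_pairing_eq _ _ ht ht'
  obtain ⟨k, hk⟩ := exists_sqNorm_vecMul_bounds X
  obtain ⟨α, β, hαβ, hk0⟩ := exists_unit_pairing_eq_zero (w * k 0 + z * k 1) (k 2)
  let y₁ : Fin 3 → ℂ := ![α * w, α * z, β]
  let y₂ : Fin 3 → ℂ := ![-star β * w, -star β * z, star α]
  let q₁ : Fin 3 → ℂ := ![star β * w', star β * z', star α]
  let q₂ : Fin 3 → ℂ := ![α * w', α * z', -β]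
  have norm_eq {a b c d : ℂ} (h : Complex.normSq a + Complex.normSq b = 1)
      (h' : Complex.normSq c + Complex.normSq d = 1) : sqNorm ![a * c, a * d, b] = 1 := by
    simp only [sqNorm, Fin.sum_univ_three, cons_val_zero, cons_val_one, cons_val_two, head_cons,
      tail_cons, map_mul]
    linear_combination h + Complex.normSq a * h'
  have hy₁ : sqNorm y₁ = 1 := norm_eq hαβ hwz
  have hy₂ : sqNorm y₂ = 1 := norm_eq (by simpa [add_comm] using hαβ) hwz
  have hq₁ : sqNorm q₁ = 1 := norm_eq (by simpa [add_comm] using hαβ) hwz'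
  have hq₂ : sqNorm q₂ = 1 := norm_eq (by simpa [add_comm] using hαβ) hwz'
  have b₁ : ‖(y₁ ᵥ* X) ⬝ᵥ q₁‖ ≤ sval X 1 := by
    have h := norm_dotProduct_sq_le (y₁ ᵥ* X) q₁
    have h' := (hk y₁).2.2 (by
      simp only [y₁, dotProduct, Fin.sum_univ_three, cons_val_zero, cons_val_one, cons_val_two,
        head_cons, tail_cons]
      linear_combination hk0)
    rw [hq₁, mul_one] at h
    rw [hy₁, mul_one] at h'
    exact le_of_sq_le_sq (h.trans h') (sval_nonneg X 1)
  have b₂ : ‖(y₂ ᵥ* X) ⬝ᵥ q₂‖ ≤ sval X 0 := by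
    have h := norm_dotProduct_sq_le (y₂ ᵥ* X) q₂
    have h' := (hk y₂).2.1
    rw [hq₂, mul_one] at h
    rw [hy₂, mul_one] at h'
    exact le_of_sq_le_sq (h.trans h') (sval_nonneg X 0)
  have hsum : ((s + t : ℝ) : ℂ) = (y₁ ᵥ* X) ⬝ᵥ q₁ + (y₂ ᵥ* X) ⬝ᵥ q₂ := by
    have hαβ' : α * star α + β * star β = 1 := by
      have := congrArg (Complex.ofReal) hαβ
      push_cast at this
      rw [Complex.normSq_eq_conj_mul_self, Complex.normSq_eq_conj_mul_self] at this
      simp only [RCLike.star_def]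
      linear_combination this
    simp only [y₁, y₂, q₁, q₂, vecMul, dotProduct, Fin.sum_univ_three, cons_val_zero,
      cons_val_one, cons_val_two, head_cons, tail_cons]
    push_cast
    linear_combination (-1 : ℂ) * (α * star α + β * star β) * (hp + hp') - (s + t : ℂ) * hαβ'
  have h := norm_add_le ((y₁ ᵥ* X) ⬝ᵥ q₁) ((y₂ ᵥ* X) ⬝ᵥ q₂)
  rw [← hsum, Complex.norm_real] at h
  linarith [Real.le_norm_self (s + t)]

/-- Cauchy–Schwarz for a positive semidefinite binary Hermitian form. -/
lemma normSq_le_mul_of_form_nonneg {A C : ℝ} {B : ℂ}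
    (h : ∀ α β : ℂ, 0 ≤ A * Complex.normSq α + C * Complex.normSq β + 2 * (α * star β * B).re) :
    Complex.normSq B ≤ A * C := by
  have hA : 0 ≤ A := by simpa using h 1 0
  have hC : 0 ≤ C := by simpa using h 0 1
  have h1 := h C (-B)
  have h2 := h (-star B) A
  have h3 := h (-star B) 1
  simp [Complex.normSq_apply] at h1 h2 h3 ⊢
  by_contra! hlt
  rcases hC.eq_or_lt with rfl | hC
  · rcases hA.eq_or_lt with rfl | hA <;> nlinarith
  · nlinarith

/-- If a `2 × 2` Gram matrix with diagonal `A`, `C`, off-diagonal entry of squared modulus `b` and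
determinant `δ²` has spectrum in `[m², M²]`, then its singular values differ by at most
`M - m`. -/
lemma gram_gap_le {A C b δ m M : ℝ} (hm : 0 ≤ m) (hM : 0 ≤ M) (hδ : 0 ≤ δ)
    (hδ' : δ ^ 2 = A * C - b) (hb : 0 ≤ b) (hA : m ^ 2 ≤ A) (hC : m ^ 2 ≤ C)
    (hA' : A ≤ M ^ 2) (hC' : C ≤ M ^ 2)
    (hlow : b ≤ (A - m ^ 2) * (C - m ^ 2)) (hhigh : b ≤ (M ^ 2 - A) * (M ^ 2 - C)) :
    A + C - 2 * δ ≤ (M - m) ^ 2 := by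
  have hp : 0 ≤ A + C - 2 * δ := by nlinarith [sq_nonneg (A - C), sq_nonneg (A + C - 2 * δ)]
  obtain ⟨r, hr, hr2⟩ : ∃ r, 0 ≤ r ∧ r ^ 2 = A + C - 2 * δ :=
    ⟨_, Real.sqrt_nonneg _, Real.sq_sqrt hp⟩
  have hmM : m ≤ M := le_of_sq_le_sq (hA.trans hA') hM
  have h1 : r * M ≤ M ^ 2 - δ := by
    refine le_of_sq_le_sq ?_ (by linarith)
    rw [mul_pow, hr2]
    nlinarith
  have h2 : r * m ≤ δ - m ^ 2 := by
    have hmδ : m ^ 2 ≤ δ := le_of_sq_le_sq (by nlinarith [sq_nonneg m]) hδ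
    refine le_of_sq_le_sq ?_ (by linarith)
    rw [mul_pow, hr2]
    nlinarith
  rw [← hr2]
  refine pow_le_pow_left₀ hr ?_ 2
  rcases (add_nonneg hM hm).eq_or_lt with h0 | h0
  · have hM0 : M = 0 := by linarith
    have hm0 : m = 0 := by linarith
    subst hM0 hm0
    nlinarith
  · nlinarith

lemma row_norm_sub_col_norm_le (hs : 0 ≤ s) (ht : 0 ≤ t)
    (hs' : s ^ 2 = Complex.normSq (X 0 2) + Complex.normSq (X 1 2))
    (ht' : t ^ 2 = Complex.normSq (X 2 0) + Complex.normSq (X 2 1)) :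
    t - s ≤ sval X 0 - sval X 2 := by
  have h20 : sval X 2 ≤ sval X 0 := sval_antitone X (by decide : (0 : Fin 3) ≤ 2)
  rcases ht.eq_or_lt with rfl | ht
  · linarith
  obtain ⟨k, hk⟩ := exists_sqNorm_vecMul_bounds X
  obtain ⟨w, z, hwz, hp⟩ := exists_unit_pairing_eq_zero
    (X 0 0 * X 2 1 - X 0 1 * X 2 0) (X 1 0 * X 2 1 - X 1 1 * X 2 0)
  set σ : ℂ := w * X 0 2 + z * X 1 2
  have hσs : ‖σ‖ ≤ s := norm_pairing_le hwz hs hs'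
  have htc : (t : ℂ) ≠ 0 := by exact_mod_cast ht.ne'
  have htc' : (t : ℂ) ^ 2 = star (X 2 0) * X 2 0 + star (X 2 1) * X 2 1 := by
    have := congrArg Complex.ofReal ht'
    push_cast at this
    rw [Complex.normSq_eq_conj_mul_self, Complex.normSq_eq_conj_mul_self] at this
    exact this
  obtain ⟨a, ha0, ha1⟩ : ∃ a : ℂ, w * X 0 0 + z * X 1 0 = a * X 2 0 ∧
      w * X 0 1 + z * X 1 1 = a * X 2 1 := by
    refine ⟨((w * X 0 0 + z * X 1 0) * star (X 2 0) + (w * X 0 1 + z * X 1 1) * star (X 2 1))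
      / (t : ℂ) ^ 2, ?_, ?_⟩ <;> field_simp <;> rw [htc']
    · linear_combination star (X 2 1) * hp
    · linear_combination -star (X 2 0) * hp
  set d := X 2 2
  set A : ℝ := Complex.normSq a * t ^ 2 + Complex.normSq σ with hA
  set C : ℝ := t ^ 2 + Complex.normSq d with hC
  set B : ℂ := a * t ^ 2 + σ * star d with hB
  have form (α β : ℂ) : sqNorm (![α * w, α * z, β] ᵥ* X) =
      A * Complex.normSq α + C * Complex.normSq β + 2 * (α * star β * B).re := by
    have e0 : (![α * w, α * z, β] ᵥ* X) 0 = (α * a + β) * X 2 0 := by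
      simp [vecMul, dotProduct, Fin.sum_univ_three]
      linear_combination α * ha0
    have e1 : (![α * w, α * z, β] ᵥ* X) 1 = (α * a + β) * X 2 1 := by
      simp [vecMul, dotProduct, Fin.sum_univ_three]
      linear_combination α * ha1
    have e2 : (![α * w, α * z, β] ᵥ* X) 2 = α * σ + β * d := by
      simp [vecMul, dotProduct, Fin.sum_univ_three]
      ring
    rw [sqNorm, Fin.sum_univ_three, e0, e1, e2, map_mul, map_mul, add_assoc, ← add_assoc,
      ← mul_add, ← ht', hA, hC, hB, show (t : ℂ) ^ 2 = ((t ^ 2 : ℝ) : ℂ) by push_cast; rfl]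
    simp only [Complex.normSq_apply, Complex.add_re, Complex.add_im, Complex.mul_re,
      Complex.mul_im, RCLike.star_def, Complex.conj_re, Complex.conj_im, Complex.ofReal_re,
      Complex.ofReal_im]
    ring
  have nrm (α β : ℂ) : sqNorm ![α * w, α * z, β] = Complex.normSq α + Complex.normSq β := by
    simp only [sqNorm, Fin.sum_univ_three, cons_val_zero, cons_val_one, cons_val_two, head_cons,
      tail_cons, map_mul]
    linear_combination Complex.normSq α * hwz
  have low (α β : ℂ) := (hk ![α * w, α * z, β]).1
  have high (α β : ℂ) := (hk ![α * w, α * z, β]).2.1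
  simp only [form, nrm] at low high
  have hδ : (t * ‖a * d - σ‖) ^ 2 = A * C - Complex.normSq B := by
    rw [mul_pow, ← Complex.normSq_eq_norm_sq, hA, hC, hB,
      show (t : ℂ) ^ 2 = ((t ^ 2 : ℝ) : ℂ) by push_cast; rfl]
    simp only [Complex.normSq_apply, Complex.add_re, Complex.add_im, Complex.mul_re,
      Complex.mul_im, RCLike.star_def, Complex.conj_re, Complex.conj_im, Complex.ofReal_re,
      Complex.ofReal_im, Complex.sub_re, Complex.sub_im]
    ring
  have gap := gram_gap_le (m := sval X 2) (M := sval X 0) (sval_nonneg X 2) (sval_nonneg X 0)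
    (mul_nonneg ht.le (norm_nonneg (a * d - σ))) hδ (Complex.normSq_nonneg B)
    (by simpa using low 1 0) (by simpa using low 0 1)
    (by simpa using high 1 0) (by simpa using high 0 1)
    (normSq_le_mul_of_form_nonneg fun α β => by have := low α β; linarith)
    (by
      have := normSq_le_mul_of_form_nonneg (A := sval X 0 ^ 2 - A) (C := sval X 0 ^ 2 - C)
        (B := -B) fun α β => by
          have := high α β
          rw [mul_neg, Complex.neg_re]
          linarith
      rwa [Complex.normSq_neg] at this)
  have tri : ‖a * d - σ‖ ≤ ‖a‖ * ‖d‖ + ‖σ‖ := (norm_sub_le _ _).trans_eq (by rw [norm_mul])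
  have hsq : (t - ‖σ‖) ^ 2 ≤ (sval X 0 - sval X 2) ^ 2 := by
    refine le_trans ?_ gap
    rw [hA, hC]
    simp only [Complex.normSq_eq_norm_sq]
    nlinarith [sq_nonneg (‖a‖ * t - ‖d‖), mul_le_mul_of_nonneg_left tri ht.le]
  have := le_of_sq_le_sq hsq (by linarith)
  linarith

end Necessity

lemma eq_of_forall_mul_eq {l m : Fin 3 → ℝ} (hl : Antitone l) (hm : Antitone m)
    (h : ∀ x : ℝ, (x - l 0) * (x - l 1) * (x - l 2) = (x - m 0) * (x - m 1) * (x - m 2)) :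
    l = m := by
  have hl1 : l 1 ≤ l 0 := hl (by decide)
  have hl2 : l 2 ≤ l 1 := hl (by decide)
  have hm1 : m 1 ≤ m 0 := hm (by decide)
  have hm2 : m 2 ≤ m 1 := hm (by decide)
  have top_le {a b c r : ℝ} (hb : b ≤ a) (hc : c ≤ b) (h : (r - a) * (r - b) * (r - c) = 0) :
      r ≤ a ∧ c ≤ r := by
    rcases mul_eq_zero.mp h with h | h
    · rcases mul_eq_zero.mp h with h | h <;> constructor <;> linarith
    · constructor <;> linarith
  have a0 := top_le hm1 hm2 (r := l 0) (by rw [← h]; ring)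
  have a2 := top_le hm1 hm2 (r := l 2) (by rw [← h]; ring)
  have b0 := top_le hl1 hl2 (r := m 0) (by rw [h]; ring)
  have b2 := top_le hl1 hl2 (r := m 2) (by rw [h]; ring)
  have e0 : l 0 = m 0 := le_antisymm a0.1 b0.1
  have e2 : l 2 = m 2 := le_antisymm b2.2 a2.2
  have e1 : l 1 = m 1 := by
    have p0 := h 0
    have p1 := h 1
    have p2 := h (-1)
    linarith
  ext i
  fin_cases i <;> assumption

/-- Singular values of a `3 × 3` matrix are determined by the polynomial `det (x - X Xᴴ)`. -/
lemma sval_eq_of_det {X : Matrix (Fin 3) (Fin 3) ℂ} {l : Fin 3 → ℝ} (hl : Antitone l)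
    (hl0 : 0 ≤ l 2)
    (h : ∀ x : ℝ, (scalar (Fin 3) (x : ℂ) - X * Xᴴ).det =
      (((x - l 0 ^ 2) * (x - l 1 ^ 2) * (x - l 2 ^ 2) : ℝ) : ℂ)) (i : Fin 3) :
    sval X i = l i := by
  have hpos (j : Fin 3) : 0 ≤ l j := hl0.trans (hl (Fin.le_last j))
  have heq := eq_of_forall_mul_eq (l := fun j => sval X j ^ 2) (m := fun j => l j ^ 2)
    (fun j k hjk => pow_le_pow_left₀ (sval_nonneg X k) (sval_antitone X hjk) 2)
    (fun j k hjk => pow_le_pow_left₀ (hpos k) (hl hjk) 2)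
    (fun x => by
      apply Complex.ofReal_injective
      rw [← h x, eval_charpoly_eq_prod_sval, Fin.prod_univ_three]
      push_cast
      rfl)
  exact (sq_eq_sq₀ (sval_nonneg X i) (hpos i)).mp (congrFun heq i)

lemma sval_transpose (X : Matrix (Fin 3) (Fin 3) ℂ) (i : Fin 3) : sval Xᵀ i = sval X i := by
  refine sval_eq_of_det (l := fun j => sval X j) (sval_antitone X) (sval_nonneg X 2) (fun x => ?_) i
  have h := eval_charpoly_eq_prod_sval X x
  rw [Fin.prod_univ_three] at h
  rw [← eval_charpoly] at h ⊢
  rw [charpoly_mul_comm, ← charpoly_transpose, transpose_mul] at h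
  rw [show Xᵀᴴ = Xᴴᵀ from rfl, h]
  push_cast
  rfl

/-- Singular values of a real `3 × 3` matrix from the sums of squares of its minors. -/
lemma sval_real_of_minors (a b c d e f p q r : ℝ) {l : Fin 3 → ℝ} (hl : Antitone l)
    (hl0 : 0 ≤ l 2)
    (h1 : a ^ 2 + b ^ 2 + c ^ 2 + d ^ 2 + e ^ 2 + f ^ 2 + p ^ 2 + q ^ 2 + r ^ 2 =
      l 0 ^ 2 + l 1 ^ 2 + l 2 ^ 2)
    (h2 : (a * e - b * d) ^ 2 + (a * f - c * d) ^ 2 + (b * f - c * e) ^ 2 +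
      (a * q - b * p) ^ 2 + (a * r - c * p) ^ 2 + (b * r - c * q) ^ 2 +
      (d * q - e * p) ^ 2 + (d * r - f * p) ^ 2 + (e * r - f * q) ^ 2 =
      l 0 ^ 2 * l 1 ^ 2 + l 0 ^ 2 * l 2 ^ 2 + l 1 ^ 2 * l 2 ^ 2)
    (h3 : (a * (e * r - f * q) - b * (d * r - f * p) + c * (d * q - e * p)) ^ 2 =
      l 0 ^ 2 * l 1 ^ 2 * l 2 ^ 2) (i : Fin 3) :
    sval (!![(a : ℂ), b, c; d, e, f; p, q, r]) i = l i := by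
  refine sval_eq_of_det hl hl0 (fun x => ?_) i
  rw [show (x - l 0 ^ 2) * (x - l 1 ^ 2) * (x - l 2 ^ 2) =
    x ^ 3 - (l 0 ^ 2 + l 1 ^ 2 + l 2 ^ 2) * x ^ 2 +
      (l 0 ^ 2 * l 1 ^ 2 + l 0 ^ 2 * l 2 ^ 2 + l 1 ^ 2 * l 2 ^ 2) * x -
      l 0 ^ 2 * l 1 ^ 2 * l 2 ^ 2 by ring, ← h1, ← h2, ← h3, det_fin_three]
  simp [vecMul, dotProduct, Fin.sum_univ_three]
  ring

section Sufficiency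

/-- A real `2 × 2` matrix with prescribed off-diagonal entries and singular values `p ≥ q`. -/
lemma exists_diagonal_entries {p q s t : ℝ} (h₁ : s + t ≤ p + q) (h₂ : |s - t| ≤ p - q)
    (hs : 0 ≤ s) (ht : 0 ≤ t) :
    ∃ f d : ℝ, f ^ 2 + d ^ 2 + s ^ 2 + t ^ 2 = p ^ 2 + q ^ 2 ∧ f * d - s * t = -(p * q) := by
  have hu : 0 ≤ (p - q) ^ 2 - (s - t) ^ 2 :=
    sub_nonneg.mpr (sq_le_sq.mpr (h₂.trans (le_abs_self _)))
  have hv : 0 ≤ (p + q) ^ 2 - (s + t) ^ 2 :=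
    sub_nonneg.mpr (pow_le_pow_left₀ (add_nonneg hs ht) h₁ 2)
  have hu' := Real.sq_sqrt hu
  have hv' := Real.sq_sqrt hv
  refine ⟨(√((p - q) ^ 2 - (s - t) ^ 2) + √((p + q) ^ 2 - (s + t) ^ 2)) / 2,
    (√((p - q) ^ 2 - (s - t) ^ 2) - √((p + q) ^ 2 - (s + t) ^ 2)) / 2, ?_, ?_⟩
  · linear_combination (hu' + hv') / 2
  · linear_combination (hu' - hv') / 4

lemma exists_matrix_of_le {l : Fin 3 → ℝ} {s t : ℝ} (hl : Antitone l) (hl0 : 0 ≤ l 2)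
    (hs : 0 ≤ s) (ht : 0 ≤ t) (hts : t ≤ s) (hs0 : s ≤ l 0) (hadd : s + t ≤ l 0 + l 1)
    (hsub : s - t ≤ l 0 - l 2) :
    ∃ X : Matrix (Fin 3) (Fin 3) ℂ, (∀ i : Fin 3, sval X i = l i) ∧
      s ^ 2 = Complex.normSq (X 0 2) + Complex.normSq (X 1 2) ∧
      t ^ 2 = Complex.normSq (X 2 0) + Complex.normSq (X 2 1) := by
  have h10 : l 1 ≤ l 0 := hl (by decide)
  have h21 : l 2 ≤ l 1 := hl (by decide)
  have habs : |s - t| = s - t := abs_of_nonneg (sub_nonneg.mpr hts)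
  by_cases hA : s - t ≤ l 0 - l 1
  · obtain ⟨f, d, e1, e2⟩ := exists_diagonal_entries hadd (habs.trans_le hA) hs ht
    refine ⟨_, sval_real_of_minors (l 2) 0 0 0 f s 0 t d hl hl0 ?_ ?_ ?_, ?_, ?_⟩
    · linear_combination e1
    · linear_combination l 2 ^ 2 * e1 + (f * d - s * t - l 0 * l 1) * e2
    · linear_combination l 2 ^ 2 * (f * d - s * t - l 0 * l 1) * e2
    · simp [sq]
    · simp [sq]
  by_cases hB : s + t ≤ l 0 + l 2
  · obtain ⟨f, d, e1, e2⟩ := exists_diagonal_entries hB (habs.trans_le hsub) hs ht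
    refine ⟨_, sval_real_of_minors (l 1) 0 0 0 f s 0 t d hl hl0 ?_ ?_ ?_, ?_, ?_⟩
    · linear_combination e1
    · linear_combination l 1 ^ 2 * e1 + (f * d - s * t - l 0 * l 2) * e2
    · linear_combination l 1 ^ 2 * (f * d - s * t - l 0 * l 2) * e2
    · simp [sq]
    · simp [sq]
  push Not at hA hB
  have hs2 : l 2 ≤ s := by linarith
  have hspos : 0 < s := by linarith
  obtain ⟨u, hu⟩ : ∃ u, u * s = l 0 * l 2 := ⟨l 0 * l 2 / s, div_mul_cancel₀ _ hspos.ne'⟩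
  have hu0 : 0 ≤ u := by
    by_contra! h
    nlinarith [mul_nonneg (hl0.trans (h21.trans h10)) hl0]
  have hut : u ≤ t := by
    by_contra! h
    nlinarith [mul_nonneg (sub_nonneg.mpr hs0) (sub_nonneg.mpr hs2)]
  have ht1 : t < l 1 := by linarith
  obtain ⟨f, hf⟩ : ∃ f, f ^ 2 = l 0 ^ 2 + l 2 ^ 2 - s ^ 2 - u ^ 2 := by
    refine ⟨_, Real.sq_sqrt ?_⟩
    have hul : u ≤ l 0 := by linarith
    have : s ^ 2 * (l 0 ^ 2 + l 2 ^ 2 - s ^ 2 - u ^ 2) = (l 0 ^ 2 - s ^ 2) * (s ^ 2 - l 2 ^ 2) := by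
      linear_combination (-(u * s) - l 0 * l 2) * hu
    have h' : 0 ≤ (l 0 ^ 2 - s ^ 2) * (s ^ 2 - l 2 ^ 2) :=
      mul_nonneg (by nlinarith) (by nlinarith)
    exact nonneg_of_mul_nonneg_right (this ▸ h') (by positivity)
  have hden : 0 < l 1 ^ 2 - u ^ 2 := by nlinarith
  have hc0 : 0 ≤ (l 1 ^ 2 - t ^ 2) / (l 1 ^ 2 - u ^ 2) := div_nonneg (by nlinarith) hden.le
  have hs0' : 0 ≤ (t ^ 2 - u ^ 2) / (l 1 ^ 2 - u ^ 2) := div_nonneg (by nlinarith) hden.le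
  obtain ⟨c, hc⟩ : ∃ c, c ^ 2 = (l 1 ^ 2 - t ^ 2) / (l 1 ^ 2 - u ^ 2) := ⟨_, Real.sq_sqrt hc0⟩
  obtain ⟨k, hk⟩ : ∃ k, k ^ 2 = (t ^ 2 - u ^ 2) / (l 1 ^ 2 - u ^ 2) := ⟨_, Real.sq_sqrt hs0'⟩
  have hck : c ^ 2 + k ^ 2 = 1 := by
    rw [hc, hk]
    field_simp
    ring
  have hkt : t ^ 2 = k ^ 2 * l 1 ^ 2 + c ^ 2 * u ^ 2 := by
    rw [hc, hk]
    field_simp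
    ring
  refine ⟨_, sval_real_of_minors (c * l 1) (-(k * u)) 0 0 f s (k * l 1) (c * u) 0 hl hl0
    ?_ ?_ ?_, ?_, ?_⟩
  · linear_combination hf + (l 1 ^ 2 + u ^ 2) * hck
  · linear_combination l 1 ^ 2 * hf + (u * s + l 0 * l 2) * hu +
      (l 1 ^ 2 * f ^ 2 + l 1 ^ 2 * s ^ 2 + u ^ 2 * s ^ 2 +
        l 1 ^ 2 * u ^ 2 * (c ^ 2 + k ^ 2 + 1)) * hck
  · linear_combination l 1 ^ 2 * u ^ 2 * s ^ 2 * (c ^ 2 + k ^ 2 + 1) * hck +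
      l 1 ^ 2 * (u * s + l 0 * l 2) * hu
  · simp [sq]
  · simp
    linear_combination hkt

end Sufficiency

/-- Membership in the cone `S(2, 1)` in terms of matrix entries. -/
lemma mem_coneS_two_one_iff (g : Fin (2 + 1) → ℝ) (s t : ℝ) :
    (g, fun _ : Fin 1 => s, fun _ : Fin 1 => t) ∈ coneS 2 1 ↔
      0 ≤ s ∧ 0 ≤ t ∧ ∃ X : Matrix (Fin 3) (Fin 3) ℂ, (∀ i : Fin 3, sval X i = g i) ∧
        s ^ 2 = Complex.normSq (X 0 2) + Complex.normSq (X 1 2) ∧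
        t ^ 2 = Complex.normSq (X 2 0) + Complex.normSq (X 2 1) := by
  have hTR (X : Matrix (Fin 3) (Fin 3) ℂ) : sval (blockTR 2 1 X) 0 ^ 2 =
      Complex.normSq (X 0 2) + Complex.normSq (X 1 2) := sq_sval_two_by_one _
  have hBL (X : Matrix (Fin 3) (Fin 3) ℂ) : sval (blockBL 2 1 X) 0 ^ 2 =
      Complex.normSq (X 2 0) + Complex.normSq (X 2 1) := sq_sval_one_by_two _
  have hTR0 (X : Matrix (Fin 3) (Fin 3) ℂ) : 0 ≤ sval (blockTR 2 1 X) 0 := sval_nonneg _ 0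
  have hBL0 (X : Matrix (Fin 3) (Fin 3) ℂ) : 0 ≤ sval (blockBL 2 1 X) 0 := sval_nonneg _ 0
  constructor
  · rintro ⟨X, h1, h2, h3⟩
    have h2' : s = sval (blockTR 2 1 X) 0 := h2 0
    have h3' : t = sval (blockBL 2 1 X) 0 := h3 0
    refine ⟨h2' ▸ hTR0 X, h3' ▸ hBL0 X, X, fun i => (h1 i).symm, ?_, ?_⟩
    · rw [h2', hTR]
    · rw [h3', hBL]
  · rintro ⟨hs, ht, X, h1, h2, h3⟩
    refine ⟨X, fun i => (h1 i).symm, fun i => ?_, fun i => ?_⟩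
    · rw [Fin.val_eq_zero i]
      exact (sq_eq_sq₀ hs (hTR0 X)).mp (h2.trans (hTR X).symm)
    · rw [Fin.val_eq_zero i]
      exact (sq_eq_sq₀ ht (hBL0 X)).mp (h3.trans (hBL X).symm)

theorem stmt_10 (g : Fin (2 + 1) → ℝ) (s t : ℝ) :
    (g, fun _ : Fin 1 => s, fun _ : Fin 1 => t) ∈ coneS 2 1 ↔
      (g 0 ≥ g 1 ∧ g 1 ≥ g 2 ∧ g 2 ≥ 0 ∧
       g 0 ≥ s ∧ s ≥ 0 ∧ g 0 ≥ t ∧ t ≥ 0 ∧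
       g 0 + g 1 ≥ s + t ∧ g 0 - g 2 ≥ |s - t|) := by
  rw [mem_coneS_two_one_iff]
  constructor
  · rintro ⟨hs, ht, X, hg, hs', ht'⟩
    have hg0 : sval X 0 = g 0 := hg 0
    have hg1 : sval X 1 = g 1 := hg 1
    have hg2 : sval X 2 = g 2 := hg 2
    have hst := row_norm_sub_col_norm_le (X := X) hs ht hs' ht'
    have hts := row_norm_sub_col_norm_le (X := Xᵀ) ht hs ht' hs'
    rw [show sval Xᵀ 0 = sval X 0 from sval_transpose X 0,
      show sval Xᵀ 2 = sval X 2 from sval_transpose X 2] at hts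
    rw [← hg0, ← hg1, ← hg2]
    exact ⟨sval_antitone X (by decide : (0 : Fin 3) ≤ 1),
      sval_antitone X (by decide : (1 : Fin 3) ≤ 2), sval_nonneg X 2,
      col_norm_le_sval_zero hs hs', hs, row_norm_le_sval_zero ht', ht,
      col_norm_add_row_norm_le hs ht hs' ht', abs_le.mpr ⟨by linarith, hts⟩⟩
  · rintro ⟨h01, h12, h2, hs0, hs, ht0, ht, hadd, hsub⟩
    have hg : Antitone g := Fin.antitone_iff_succ_le.mpr fun i => by fin_cases i <;> assumption
    refine ⟨hs, ht, ?_⟩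
    rcases le_total t s with hts | hts
    · exact exists_matrix_of_le hg h2 hs ht hts hs0 hadd ((le_abs_self _).trans hsub)
    · obtain ⟨X, hX, h1, h2⟩ := exists_matrix_of_le hg h2 ht hs hts ht0 (by linarith)
        (by linarith [neg_abs_le (s - t)])
      exact ⟨Xᵀ, fun i => (sval_transpose X i).trans (hX i), h2, h1⟩
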